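/- Let W : ℝ → ℝ be bounded, of bounded variation, even, with W(x) = 0 for |x| ≥ 1. Let k ≥ 0 be an integer. Then there exists C > 0, depending only on W and k, such that for every integer T ≥ 2, every b ∈ (0, π/2), and every ω ∈ [0, 2π]: (i) if k is even, (2π/T) ∑_{s=0}^{T−1} W_b(ω − u_s)² · (ω − u_s)^k ≤ b^{k−1} · ∫_ℝ W(α)² α^k dα + C/(T·b²); (ii) if k is odd, |(2π/T) ∑_{s=0}^{T−1} W_b(ω − u_s)² · (ω − u_s)^k| ≤ C/(T·b²). -/

import Mathlib

/-- The periodized smoothing kernel `W_b(x) = (1/b) ∑_{k ∈ ℤ} W((x + 2kπ)/b)`. -/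
noncomputable def Wper (W : ℝ → ℝ) (b x : ℝ) : ℝ :=
  (1 / b) * ∑' k : ℤ, W ((x + 2 * (k : ℝ) * Real.pi) / b)

open MeasureTheory

/-- Periodization does nothing on `[-π, π]` when the bandwidth is smaller than `π`. -/
lemma Wper_eq_of_abs_le_pi {W : ℝ → ℝ} (hsupp : ∀ x : ℝ, 1 ≤ |x| → W x = 0) {b x : ℝ}
    (hb : 0 < b) (hbπ : b < Real.pi) (hx : |x| ≤ Real.pi) :
    Wper W b x = 1 / b * W (x / b) := by
  unfold Wper
  rw [tsum_eq_single (0 : ℤ)]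
  · simp
  · intro j hj
    apply hsupp
    rw [abs_div, abs_of_pos hb, le_div_iff₀ hb, one_mul]
    have hj1 : (1 : ℝ) ≤ |(j : ℝ)| := by exact_mod_cast Int.one_le_abs hj
    have h1 : |2 * (j : ℝ) * Real.pi| = 2 * |(j : ℝ)| * Real.pi := by
      rw [abs_mul, abs_mul, abs_of_pos Real.pi_pos, abs_two]
    have h2 : |2 * (j : ℝ) * Real.pi| ≤ |x + 2 * (j : ℝ) * Real.pi| + |x| := by
      simpa using abs_sub (x + 2 * (j : ℝ) * Real.pi) x
    nlinarith [Real.pi_pos]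

/-- A sum over representatives of the `T`-point grid modulo `2π`, of a function vanishing outside
`(-b, b)`, is a sum over consecutive points of the unwrapped grid. -/
lemma sum_grid_representatives_eq {f : ℝ → ℝ} {b ω : ℝ} (hbπ : b < Real.pi)
    (hf : ∀ x, b ≤ |x| → f x = 0) {T : ℕ} (hT : 0 < T)
    (hω : ω ∈ Set.Icc (0 : ℝ) (2 * Real.pi)) {u : ℕ → ℝ}
    (hu : ∀ s < T, (∃ m : ℤ, u s = 2 * Real.pi * s / T + 2 * (m : ℝ) * Real.pi) ∧
      |ω - u s| ≤ Real.pi) :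
    ∑ s ∈ Finset.range T, f (ω - u s) =
      ∑ i ∈ Finset.range (4 * T), f (ω - 4 * Real.pi + 2 * Real.pi / T * i) := by
  have hπ := Real.pi_pos
  have hT' : (0 : ℝ) < T := by exact_mod_cast hT
  have hm : ∀ s, ∃ m : ℤ, s < T → u s = 2 * Real.pi * s / T + 2 * (m : ℝ) * Real.pi := by
    intro s
    by_cases hs : s < T
    · obtain ⟨m, hm⟩ := (hu s hs).1
      exact ⟨m, fun _ => hm⟩
    · exact ⟨0, fun h => absurd h hs⟩
  choose m hm using hm
  have hbound : ∀ s < T, 0 ≤ 2 * (T : ℤ) - s - m s * T ∧ 2 * (T : ℤ) - s - m s * T < 4 * T := by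
    intro s hs
    have habs := abs_le.1 (hu s hs).2
    have hus : u s * T = 2 * Real.pi * (s + m s * T) := by
      rw [hm s hs]; field_simp
    have h1 : (s + m s * T : ℝ) < 2 * T := by
      have : u s * T < 2 * Real.pi * (2 * T) := by nlinarith [hω.1, hω.2]
      rw [hus] at this
      exact lt_of_mul_lt_mul_left this (by positivity)
    have h2 : -(2 * T : ℝ) < s + m s * T := by
      have : 2 * Real.pi * (-(2 * T)) < u s * T := by nlinarith [hω.1, hω.2]
      rw [hus] at this
      exact lt_of_mul_lt_mul_left this (by positivity)
    have h1' : (s + m s * T : ℤ) < 2 * T := by exact_mod_cast h1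
    have h2' : -(2 * T : ℤ) < s + m s * T := by exact_mod_cast h2
    constructor <;> linarith
  refine Finset.sum_of_injOn (fun s => (2 * (T : ℤ) - s - m s * T).toNat) ?_ ?_ ?_ ?_
  · intro s hs t ht hst
    simp only [Finset.coe_range, Set.mem_Iio] at hs ht
    have h : 2 * (T : ℤ) - s - m s * T = 2 * (T : ℤ) - t - m t * T := by
      have hs0 := (hbound s hs).1
      have ht0 := (hbound t ht).1
      simp only at hst
      omega
    have hmod : (s : ℤ) % T = (t : ℤ) % T := by
      have : (s : ℤ) = t + (m t - m s) * T := by linarith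
      rw [this, Int.add_mul_emod_self_right]
    rw [Int.emod_eq_of_lt (by omega) (by omega), Int.emod_eq_of_lt (by omega) (by omega)] at hmod
    exact_mod_cast hmod
  · intro s hs
    simp only [Finset.coe_range, Set.mem_Iio] at hs ⊢
    have := hbound s hs
    omega
  · intro i _ hi
    by_contra hne
    have hy : |ω - 4 * Real.pi + 2 * Real.pi / T * i| < b := by
      by_contra h
      exact hne (hf _ (not_lt.1 h))
    apply hi
    have hTz : (0 : ℤ) < T := by exact_mod_cast hT
    set n : ℤ := 2 * T - i with hn
    obtain ⟨s, hs⟩ := Int.eq_ofNat_of_zero_le (Int.emod_nonneg n hTz.ne')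
    have hsT : s < T := by
      have := Int.emod_lt_of_pos n hTz
      omega
    have hdiv : (s : ℤ) + T * (n / T) = n := by
      rw [← hs]; exact Int.emod_add_mul_ediv n T
    refine ⟨s, by simpa using hsT, ?_⟩
    have hir : (i : ℝ) = 2 * T - (s + T * ((n / T : ℤ) : ℝ)) := by
      have : (i : ℤ) = 2 * T - (s + T * (n / T)) := by rw [hdiv, hn]; ring
      exact_mod_cast this
    have hdiff : (ω - 4 * Real.pi + 2 * Real.pi / T * i) - (ω - u s) =
        2 * Real.pi * ((m s - n / T : ℤ) : ℝ) := by
      rw [hm s hsT, hir]; push_cast; field_simp; ring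
    have hlt : |2 * Real.pi * ((m s - n / T : ℤ) : ℝ)| < 2 * Real.pi := by
      rw [← hdiff]
      linarith [abs_sub (ω - 4 * Real.pi + 2 * Real.pi / T * i) (ω - u s), (hu s hsT).2]
    rw [abs_mul, abs_of_pos (by positivity : 0 < 2 * Real.pi)] at hlt
    have hlt1 : |((m s - n / T : ℤ) : ℝ)| < 1 := by
      nlinarith
    have hzero : m s - n / T = 0 := Int.abs_lt_one_iff.1 (by exact_mod_cast hlt1)
    have hms : m s = n / T := by linarith
    have : 2 * (T : ℤ) - s - m s * T = i := by
      rw [hms]; linarith [mul_comm (T : ℤ) (n / T)]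
    simp only [this, Int.toNat_natCast]
  · intro s hs
    have hs := Finset.mem_range.1 hs
    congr 1
    have hcast : (((2 * (T : ℤ) - s - m s * T).toNat : ℕ) : ℝ) = 2 * T - s - m s * T := by
      have := Int.toNat_of_nonneg (hbound s hs).1
      exact_mod_cast congrArg (Int.cast : ℤ → ℝ) this
    rw [hcast, hm s hs]
    field_simp
    ring

/-- Left Riemann sums of a function whose increments are dominated by those of `F`. -/
lemma abs_riemann_sum_sub_integral_le {g F : ℝ → ℝ}
    (hgF : ∀ x y, x ≤ y → |g x - g y| ≤ F y - F x) (a : ℝ) {h : ℝ} (hh : 0 ≤ h) (n : ℕ) :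
    |h * ∑ i ∈ Finset.range n, g (a + h * i) - ∫ x in a..(a + h * n), g x| ≤
      h * (F (a + h * n) - F a) := by
  have hF : Monotone F := fun x y hxy => by linarith [hgF x y hxy, abs_nonneg (g x - g y)]
  have hsum : Monotone fun x => F x + g x := fun x y hxy => by
    have := (abs_le.1 (hgF x y hxy)).2
    simp only
    linarith
  have hint : ∀ x y, IntervalIntegrable g volume x y := fun x y => by
    simpa using (hsum.intervalIntegrable (μ := volume) (a := x) (b := y)).sub
      hF.intervalIntegrable
  have hadj := intervalIntegral.sum_integral_adjacent_intervals (f := g) (μ := volume)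
    (a := fun i : ℕ => a + h * i) (n := n) fun _ _ => hint _ _
  have htel := Finset.sum_range_sub (fun i : ℕ => F (a + h * i)) n
  simp only [Nat.cast_zero, mul_zero, add_zero] at hadj htel
  rw [← hadj, ← htel, Finset.mul_sum, Finset.mul_sum, ← Finset.sum_sub_distrib]
  refine (Finset.abs_sum_le_sum_abs _ _).trans (Finset.sum_le_sum fun i _ => ?_)
  set p := a + h * (i : ℝ)
  have hq : a + h * ((i + 1 : ℕ) : ℝ) = p + h := by push_cast; ring
  rw [hq]
  have hconst : h * g p - ∫ x in p..(p + h), g x = ∫ x in p..(p + h), (g p - g x) := by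
    rw [intervalIntegral.integral_sub intervalIntegrable_const (hint _ _)]
    simp
  rw [hconst, ← Real.norm_eq_abs]
  refine (intervalIntegral.norm_integral_le_of_norm_le_const
    (C := F (p + h) - F p) fun x hx => ?_).trans ?_
  · rw [Set.uIoc_of_le (by linarith)] at hx
    exact (hgF p x hx.1.le).trans (by linarith [hF hx.2])
  · rw [add_sub_cancel_left, abs_of_nonneg hh, mul_comm]

/-- The increments of `W² x ^ k` are dominated by those of a function of bounded range. -/
lemma exists_dominating_increments {W : ℝ → ℝ} (k : ℕ) (hWbd : ∃ M, ∀ x, |W x| ≤ M)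
    (hBV : BoundedVariationOn W Set.univ) (hsupp : ∀ x : ℝ, 1 ≤ |x| → W x = 0) :
    ∃ (F : ℝ → ℝ) (D : ℝ), 0 ≤ D ∧ (∀ x y, x ≤ y → F y - F x ≤ D) ∧
      ∀ x y, x ≤ y → |W x ^ 2 * x ^ k - W y ^ 2 * y ^ k| ≤ F y - F x := by
  obtain ⟨M, hM⟩ := hWbd
  have hM0 : 0 ≤ M := (abs_nonneg _).trans (hM 0)
  set c : ℝ → ℝ := fun x => max (-1) (min 1 x) with hc
  have hcmono : Monotone c := fun x y hxy => max_le_max le_rfl (min_le_min le_rfl hxy)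
  have hclow : ∀ x, -1 ≤ c x := fun x => le_max_left _ _
  have hcup : ∀ x, c x ≤ 1 := fun x => max_le (by norm_num) (min_le_left _ _)
  have hcabs : ∀ x, |c x| ≤ 1 := fun x => abs_le.2 ⟨hclow x, hcup x⟩
  have hclip : ∀ x, W x ^ 2 * x ^ k = W x ^ 2 * c x ^ k := fun x => by
    by_cases hx : 1 ≤ |x|
    · simp [hsupp x hx]
    · have hx' := abs_lt.1 (not_le.1 hx)
      simp only [hc, min_eq_right hx'.2.le, max_eq_right hx'.1.le]
  set V : ℝ → ℝ := variationOnFromTo W Set.univ 0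
  have hV : ∀ x y, x ≤ y → V y - V x = (eVariationOn W (Set.Icc x y)).toReal := by
    intro x y hxy
    have hadd := variationOnFromTo.add hBV.locallyBoundedVariationOn
      (Set.mem_univ (0 : ℝ)) (Set.mem_univ x) (Set.mem_univ y)
    rw [variationOnFromTo.eq_of_le W Set.univ hxy, Set.univ_inter] at hadd
    simp only [V]
    linarith
  refine ⟨fun x => 2 * M * V x + M ^ 2 * k * c x,
    2 * M * (eVariationOn W Set.univ).toReal + M ^ 2 * k * 2, by positivity, ?_, ?_⟩
  · intro x y hxy
    have h1 : V y - V x ≤ (eVariationOn W Set.univ).toReal := by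
      rw [hV x y hxy]
      exact ENNReal.toReal_mono hBV (eVariationOn.mono W (Set.subset_univ _))
    have h2 : c y - c x ≤ 2 := by linarith [hclow x, hcup y]
    have h3 := mul_le_mul_of_nonneg_left h1 (by positivity : 0 ≤ 2 * M)
    have h4 := mul_le_mul_of_nonneg_left h2 (by positivity : 0 ≤ M ^ 2 * k)
    simp only
    linarith
  · intro x y hxy
    have h1 : |W x - W y| ≤ V y - V x := by
      rw [hV x y hxy, ← Real.dist_eq]
      exact (hBV.mono (Set.subset_univ _)).dist_le (Set.left_mem_Icc.2 hxy)
        (Set.right_mem_Icc.2 hxy)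
    have h2 : |c x ^ k - c y ^ k| ≤ k * (c y - c x) := by
      refine (abs_pow_sub_pow_le _ _ _).trans ?_
      rw [abs_sub_comm, abs_of_nonneg (sub_nonneg.2 (hcmono hxy)), mul_comm (k : ℝ)]
      exact mul_le_of_le_one_right
        (mul_nonneg (sub_nonneg.2 (hcmono hxy)) (Nat.cast_nonneg k))
        (pow_le_one₀ (by positivity) (max_le (hcabs x) (hcabs y)))
    have h3 : |W x ^ 2 - W y ^ 2| ≤ 2 * M * (V y - V x) := by
      rw [sq_sub_sq, abs_mul]
      refine mul_le_mul ?_ h1 (abs_nonneg _) (by positivity)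
      linarith [abs_add_le (W x) (W y), hM x, hM y]
    have h4 : |c x ^ k| ≤ 1 := by
      rw [abs_pow]
      exact pow_le_one₀ (abs_nonneg _) (hcabs x)
    have h5 : |W y ^ 2| ≤ M ^ 2 := by
      rw [abs_pow]
      exact pow_le_pow_left₀ (abs_nonneg _) (hM y) 2
    rw [hclip x, hclip y]
    calc |W x ^ 2 * c x ^ k - W y ^ 2 * c y ^ k|
        = |(W x ^ 2 - W y ^ 2) * c x ^ k + W y ^ 2 * (c x ^ k - c y ^ k)| := by ring_nf
      _ ≤ |W x ^ 2 - W y ^ 2| * |c x ^ k| + |W y ^ 2| * |c x ^ k - c y ^ k| := by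
          rw [← abs_mul, ← abs_mul]; exact abs_add_le _ _
      _ ≤ 2 * M * (V y - V x) * 1 + M ^ 2 * (k * (c y - c x)) :=
          add_le_add (mul_le_mul h3 h4 (abs_nonneg _) ((abs_nonneg _).trans h3))
            (mul_le_mul h5 h2 (abs_nonneg _) (by positivity))
      _ = _ := by ring

/-- **Riemann-sum kernel lemma, part (C).**
Let `W` be bounded, of bounded variation, even, supported in `[-1,1]`, and let `k ≥ 0`.
Then there is `C > 0` (depending only on `W, k`) such that for all `T ≥ 2`,
`b ∈ (0, π/2)`, `ω ∈ [0, 2π]`, and any admissible choice of grid points `u`: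
(i) if `k` is even,
    `(2π/T) ∑_{s<T} W_b(ω - u s)² (ω - u s)^k ≤ b^{k-1} ∫ W(α)² α^k dα + C/(T b²)`;
(ii) if `k` is odd,
    `|(2π/T) ∑_{s<T} W_b(ω - u s)² (ω - u s)^k| ≤ C/(T b²)`. -/
theorem kernel_riemann_sum_C (W : ℝ → ℝ) (k : ℕ)
    (hWbd : ∃ M, ∀ x, |W x| ≤ M)
    (hBV : BoundedVariationOn W Set.univ)
    (hWeven : ∀ x, W (-x) = W x)
    (hsupp : ∀ x : ℝ, 1 ≤ |x| → W x = 0) :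
    ∃ C > (0 : ℝ), ∀ T : ℕ, 2 ≤ T → ∀ b : ℝ, 0 < b → b < Real.pi / 2 →
      ∀ ω ∈ Set.Icc (0 : ℝ) (2 * Real.pi),
      ∀ u : ℕ → ℝ,
        (∀ s < T, (∃ m : ℤ, u s = 2 * Real.pi * s / T + 2 * (m : ℝ) * Real.pi) ∧
          |ω - u s| ≤ Real.pi) →
        (Even k →
          (2 * Real.pi / T) * ∑ s ∈ Finset.range T, (Wper W b (ω - u s)) ^ 2 * (ω - u s) ^ k ≤
            b ^ ((k : ℤ) - 1) * (∫ x, (W x) ^ 2 * x ^ k) + C / (T * b ^ 2)) ∧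
        (Odd k →
          |(2 * Real.pi / T) * ∑ s ∈ Finset.range T, (Wper W b (ω - u s)) ^ 2 * (ω - u s) ^ k| ≤
            C / (T * b ^ 2)) := by
  obtain ⟨F, D, hD, hFD, hgF⟩ := exists_dominating_increments k hWbd hBV hsupp
  have hπ := Real.pi_pos
  refine ⟨2 * Real.pi * (Real.pi / 2) ^ k * D + 1, by positivity, ?_⟩
  intro T hT b hb hbπ ω hω u hu
  have hT' : (0 : ℝ) < T := by exact_mod_cast (by omega : 0 < T)
  have hbπ' : b < Real.pi := by linarith
  set g : ℝ → ℝ := fun x => W x ^ 2 * x ^ k with hg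
  set h : ℝ := 2 * Real.pi / T / b with hh
  set a : ℝ := (ω - 4 * Real.pi) / b with ha
  have hpow : b ^ ((k : ℤ) - 1) = b ^ k / b := by
    rw [zpow_sub₀ hb.ne', zpow_natCast, zpow_one]
  have hkernel : ∀ s ∈ Finset.range T, Wper W b (ω - u s) ^ 2 * (ω - u s) ^ k =
      b ^ k / b ^ 2 * g ((ω - u s) / b) := by
    intro s hs
    rw [Wper_eq_of_abs_le_pi hsupp hb hbπ' (hu s (Finset.mem_range.1 hs)).2]
    simp only [hg, div_pow, mul_pow]
    field_simp
  have hunwrap : ∑ s ∈ Finset.range T, g ((ω - u s) / b) =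
      ∑ i ∈ Finset.range (4 * T), g (a + h * i) := by
    rw [sum_grid_representatives_eq (f := fun x => g (x / b)) hbπ' ?_ (by omega) hω hu]
    · refine Finset.sum_congr rfl fun i _ => ?_
      congr 1
      rw [ha, hh]
      ring
    · intro x hx
      have : W (x / b) = 0 := by
        apply hsupp
        rwa [abs_div, abs_of_pos hb, le_div_iff₀ hb, one_mul]
      simp [hg, this]
  have hsum : 2 * Real.pi / T * ∑ s ∈ Finset.range T, Wper W b (ω - u s) ^ 2 * (ω - u s) ^ k =
      b ^ ((k : ℤ) - 1) * (h * ∑ i ∈ Finset.range (4 * T), g (a + h * i)) := by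
    rw [Finset.sum_congr rfl hkernel, ← Finset.mul_sum, hunwrap, hpow, hh]
    field_simp
  have hend : a + h * ((4 * T : ℕ) : ℝ) = (ω + 4 * Real.pi) / b := by
    rw [ha, hh]
    push_cast
    field_simp
    ring
  have hintegral : ∫ x in a..(a + h * ((4 * T : ℕ) : ℝ)), g x = ∫ x, g x := by
    apply intervalIntegral.integral_eq_integral_of_support_subset
    intro x hx
    have hx1 : |x| < 1 := by
      by_contra hcon
      exact hx (by simp [hg, hsupp x (not_lt.1 hcon)])
    have hx2 := abs_lt.1 hx1
    rw [hend, ha]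
    constructor
    · rw [div_lt_iff₀ hb]
      nlinarith [hω.1, hω.2]
    · rw [le_div_iff₀ hb]
      nlinarith [hω.1, hω.2]
  have hh0 : 0 < h := by positivity
  have hriemann := abs_riemann_sum_sub_integral_le hgF a hh0.le (4 * T)
  rw [hintegral] at hriemann
  have hD' := hFD a (a + h * ((4 * T : ℕ) : ℝ)) (le_add_of_nonneg_right (by positivity))
  have key : |2 * Real.pi / T * ∑ s ∈ Finset.range T, Wper W b (ω - u s) ^ 2 * (ω - u s) ^ k -
      b ^ ((k : ℤ) - 1) * ∫ x, g x| ≤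
        (2 * Real.pi * (Real.pi / 2) ^ k * D + 1) / (T * b ^ 2) := by
    have hbk : b ^ k ≤ (Real.pi / 2) ^ k := pow_le_pow_left₀ hb.le hbπ.le k
    rw [hsum, ← mul_sub, abs_mul, abs_of_pos (by positivity)]
    calc b ^ ((k : ℤ) - 1) * |h * ∑ i ∈ Finset.range (4 * T), g (a + h * i) - ∫ x, g x|
        ≤ b ^ ((k : ℤ) - 1) * (h * D) := by
          gcongr
          exact hriemann.trans (by gcongr)
      _ = (2 * Real.pi * b ^ k * D) / (T * b ^ 2) := by
          rw [hpow, hh]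
          field_simp
      _ ≤ _ := by
          gcongr
          have : 2 * Real.pi * b ^ k * D ≤ 2 * Real.pi * (Real.pi / 2) ^ k * D := by gcongr
          linarith
  refine ⟨fun _ => by linarith [(abs_le.1 key).2], fun hk => ?_⟩
  have hzero : ∫ x, g x = 0 := by
    have hneg := integral_neg_eq_self g volume
    have hodd : ∀ x, g (-x) = -g x := fun x => by simp [hg, hWeven, hk.neg_pow]
    simp only [hodd, integral_neg] at hneg
    linarith
  rwa [hzero, mul_zero, sub_zero] at key
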